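/- Let α ∈ (1,∞). Let ρ₁, ρ₂ be positive semidefinite complex matrices and σ₁, σ₂ positive definite complex matrices, with ρ₁, σ₁ of size n₁ and ρ₂, σ₂ of size n₂. Then Q^#_α(ρ₁ ⊕ ρ₂ ‖ σ₁ ⊕ σ₂) = Q^#_α(ρ₁‖σ₁) + Q^#_α(ρ₂‖σ₂), where ⊕ denotes the block-diagonal direct sum of matrices (the (n₁+n₂)×(n₁+n₂) matrix with blocks ρ₁, ρ₂ on the diagonal and zero off-diagonal blocks). -/

import Mathlib

open Matrix Filter
open scoped Kronecker Classical ComplexOrder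

noncomputable def Matrix.rpowH {n : Type*} [Fintype n] [DecidableEq n]
    (A : Matrix n n ℂ) (r : ℝ) : Matrix n n ℂ :=
  if hA : A.IsHermitian then
    (hA.eigenvectorUnitary : Matrix n n ℂ) *
      Matrix.diagonal (fun i => ((hA.eigenvalues i ^ r : ℝ) : ℂ)) *
      star (hA.eigenvectorUnitary : Matrix n n ℂ)
  else 0

noncomputable def Matrix.gmean {n : Type*} [Fintype n] [DecidableEq n]
    (β : ℝ) (S A : Matrix n n ℂ) : Matrix n n ℂ :=
  S.rpowH (1/2) * ((S.rpowH (-(1/2)) * A * S.rpowH (-(1/2))).rpowH β) * S.rpowH (1/2)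

noncomputable def QSharp {n : Type*} [Fintype n] [DecidableEq n]
    (α : ℝ) (ρ σ : Matrix n n ℂ) : ℝ :=
  sInf { t : ℝ | ∃ A : Matrix n n ℂ, A.PosSemidef ∧
    (Matrix.gmean (1/α) σ A - ρ).PosSemidef ∧ t = A.trace.re }

noncomputable def DSharp {n : Type*} [Fintype n] [DecidableEq n]
    (α : ℝ) (ρ σ : Matrix n n ℂ) : ℝ :=
  1/(α-1) * Real.logb 2 (QSharp α ρ σ)

noncomputable def opNorm {n : Type*} [Fintype n] [DecidableEq n] (A : Matrix n n ℂ) : ℝ :=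
  ‖(Matrix.toEuclideanCLM (𝕜 := ℂ) A : EuclideanSpace ℂ n →L[ℂ] EuclideanSpace ℂ n)‖

noncomputable def Dtilde {n : Type*} [Fintype n] [DecidableEq n]
    (α : ℝ) (ρ σ : Matrix n n ℂ) : ℝ :=
  1/(α-1) * Real.logb 2
    (((σ.rpowH ((1-α)/(2*α)) * ρ * σ.rpowH ((1-α)/(2*α))).rpowH α).trace.re)

noncomputable def Dhat {n : Type*} [Fintype n] [DecidableEq n]
    (α : ℝ) (ρ σ : Matrix n n ℂ) : ℝ :=
  1/(α-1) * Real.logb 2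
    ((σ.rpowH (1/2) * ((σ.rpowH (-(1/2)) * ρ * σ.rpowH (-(1/2))).rpowH α) * σ.rpowH (1/2)).trace.re)

/-!
The functional calculus acts blockwise on block-diagonal matrices, and so does the geometric mean.
Hence the direct sum of feasible points `A₁`, `A₂` of the two small problems is feasible for the
large one, which gives `≤`. For `≥`, let `A` be feasible for the large problem and replace it by its
pinching onto the diagonal blocks, the average of `A` and its conjugate under `1 ⊕ (-1)`. This keeps
the trace, and since `x ↦ x ^ (1 / α)` is operator concave it can only increase the pinching of
`(σ₁ ⊕ σ₂) #_{1/α} A`, which dominates `ρ₁ ⊕ ρ₂`. So the pinching of `A` is again feasible, and its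
blocks are feasible for the two small problems.
-/

section BlockDiagonal

variable {m n R 𝕜 : Type*}

/-- The pinching of a matrix onto its two diagonal blocks. -/
def pinching [Zero R] (A : Matrix (m ⊕ n) (m ⊕ n) R) : Matrix (m ⊕ n) (m ⊕ n) R :=
  fromBlocks A.toBlocks₁₁ 0 0 A.toBlocks₂₂

@[simp]
theorem pinching_fromBlocks [Zero R] (A : Matrix m m R) (B : Matrix m n R) (C : Matrix n m R)
    (D : Matrix n n R) : pinching (fromBlocks A B C D) = fromBlocks A 0 0 D := by
  simp [pinching]

theorem pinching_sub [AddGroup R] (A B : Matrix (m ⊕ n) (m ⊕ n) R) :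
    pinching (A - B) = pinching A - pinching B := by
  ext (i | i) (j | j) <;> simp [pinching, toBlocks₁₁, toBlocks₂₂]

theorem pinching_mul_mul_fromBlocks [Fintype m] [Fintype n] [NonUnitalSemiring R]
    (P : Matrix m m R) (Q : Matrix n n R) (A : Matrix (m ⊕ n) (m ⊕ n) R) (P' : Matrix m m R)
    (Q' : Matrix n n R) :
    pinching (fromBlocks P 0 0 Q * A * fromBlocks P' 0 0 Q') =
      fromBlocks P 0 0 Q * pinching A * fromBlocks P' 0 0 Q' := by
  rw [← fromBlocks_toBlocks A]
  simp [fromBlocks_multiply]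

theorem trace_fromBlocks [Fintype m] [Fintype n] [AddCommMonoid R] (A : Matrix m m R)
    (B : Matrix m n R) (C : Matrix n m R) (D : Matrix n n R) :
    (fromBlocks A B C D).trace = A.trace + D.trace := by
  simp [trace]

theorem trace_pinching [Fintype m] [Fintype n] [AddCommMonoid R]
    (A : Matrix (m ⊕ n) (m ⊕ n) R) : (pinching A).trace = A.trace := by
  rw [← fromBlocks_toBlocks A, pinching_fromBlocks, trace_fromBlocks, trace_fromBlocks]

theorem sum_star_mul_fromBlocks_zero_mul [NonUnitalSemiring R] [StarRing R] (A : Matrix m m R)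
    (B : Matrix n n R) (y : m →₀ R) (z : n →₀ R) :
    ((y.sumElim z).sum fun i xi => (y.sumElim z).sum fun j xj =>
        star xi * fromBlocks A 0 0 B i j * xj) =
      (y.sum fun i xi => y.sum fun j xj => star xi * A i j * xj) +
        z.sum fun i xi => z.sum fun j xj => star xi * B i j * xj := by
  simp [Finsupp.sum_sumElim, Function.comp_def]

variable [Ring R] [PartialOrder R] [IsOrderedAddMonoid R] [StarRing R]

theorem posSemidef_fromBlocks_zero_iff {A : Matrix m m R} {B : Matrix n n R} :
    (fromBlocks A 0 0 B).PosSemidef ↔ A.PosSemidef ∧ B.PosSemidef := by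
  refine ⟨fun h => ⟨h.submatrix Sum.inl, h.submatrix Sum.inr⟩, fun ⟨hA, hB⟩ =>
    ⟨hA.1.fromBlocks conjTranspose_zero hB.1, fun x => ?_⟩⟩
  obtain ⟨⟨y, z⟩, rfl⟩ := Finsupp.sumFinsuppEquivProdFinsupp.symm.surjective x
  exact (add_nonneg (hA.2 y) (hB.2 z)).trans_eq (sum_star_mul_fromBlocks_zero_mul A B y z).symm

theorem posDef_fromBlocks_zero {A : Matrix m m R} {B : Matrix n n R} (hA : A.PosDef)
    (hB : B.PosDef) : (fromBlocks A 0 0 B).PosDef := by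
  refine ⟨hA.1.fromBlocks conjTranspose_zero hB.1, fun x hx => ?_⟩
  obtain ⟨⟨y, z⟩, rfl⟩ := Finsupp.sumFinsuppEquivProdFinsupp.symm.surjective x
  refine lt_of_lt_of_eq ?_ (sum_star_mul_fromBlocks_zero_mul A B y z).symm
  rcases eq_or_ne y 0 with rfl | hy
  · have hz : z ≠ 0 := by
      rintro rfl
      exact hx (by ext (i | i) <;> rfl)
    exact add_pos_of_nonneg_of_pos (hA.posSemidef.2 0) (hB.2 hz)
  · exact add_pos_of_pos_of_nonneg (hA.2 hy) (hB.posSemidef.2 z)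

theorem posSemidef_pinching {A : Matrix (m ⊕ n) (m ⊕ n) R} (hA : A.PosSemidef) :
    (pinching A).PosSemidef :=
  posSemidef_fromBlocks_zero_iff.2 ⟨hA.submatrix Sum.inl, hA.submatrix Sum.inr⟩

open scoped MatrixOrder

theorem fromBlocks_zero_le_fromBlocks_zero_iff [RCLike 𝕜]
    {A A' : Matrix m m 𝕜} {B B' : Matrix n n 𝕜} :
    fromBlocks A 0 0 B ≤ fromBlocks A' 0 0 B' ↔ A ≤ A' ∧ B ≤ B' := by
  simp only [le_iff, ← posSemidef_fromBlocks_zero_iff]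
  simp only [sub_eq_add_neg, fromBlocks_neg, fromBlocks_add, neg_zero, add_zero]

theorem pinching_mono [RCLike 𝕜] :
    Monotone (pinching : Matrix (m ⊕ n) (m ⊕ n) 𝕜 → Matrix (m ⊕ n) (m ⊕ n) 𝕜) := by
  intro A B hAB
  rw [le_iff, ← pinching_sub]
  exact posSemidef_pinching hAB

end BlockDiagonal

section FunctionalCalculus

open scoped MatrixOrder Matrix.Norms.L2Operator

variable {m n : Type*} [Fintype m] [DecidableEq m] [Fintype n] [DecidableEq n]

/-- The embedding of pairs of matrices as block-diagonal matrices. It is stated over `ℝ` because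
that is the scalar ring of the functional calculus of Hermitian matrices. -/
def fromBlocksStarAlgHom (m n : Type*) [Fintype m] [DecidableEq m] [Fintype n] [DecidableEq n] :
    Matrix m m ℂ × Matrix n n ℂ →⋆ₐ[ℝ] Matrix (m ⊕ n) (m ⊕ n) ℂ where
  toFun p := fromBlocks p.1 0 0 p.2
  map_one' := by simp
  map_mul' := by simp [fromBlocks_multiply]
  map_zero' := by simp
  map_add' := by simp [fromBlocks_add]
  commutes' r := by
    simp [Algebra.algebraMap_eq_smul_one, ← fromBlocks_one, fromBlocks_smul]
  map_star' := by simp [star_eq_conjTranspose, fromBlocks_conjTranspose]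

theorem cfc_fromBlocks_zero (f : ℝ → ℝ) {A : Matrix m m ℂ} {B : Matrix n n ℂ}
    (hA : A.IsHermitian) (hB : B.IsHermitian) :
    cfc f (fromBlocks A 0 0 B) = fromBlocks (cfc f A) 0 0 (cfc f B) := by
  -- Instance search does not find the real functional calculus of the product by itself.
  have : ContinuousFunctionalCalculus ℝ (Matrix m m ℂ × Matrix n n ℂ) IsSelfAdjoint :=
    IsSelfAdjoint.instContinuousFunctionalCalculus
  have hf : ContinuousOn f (spectrum ℝ A ∪ spectrum ℝ B) :=
    (A.finite_real_spectrum.union B.finite_real_spectrum).continuousOn f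
  have hAB : IsSelfAdjoint (A, B) := Prod.ext hA hB
  have hφ : Continuous (fromBlocksStarAlgHom m n) :=
    continuous_fst.matrix_fromBlocks continuous_const continuous_const continuous_snd
  calc cfc f (fromBlocks A 0 0 B)
      = cfc f (fromBlocksStarAlgHom m n (A, B)) := rfl
    _ = fromBlocksStarAlgHom m n (cfc f (A, B)) :=
        ((fromBlocksStarAlgHom m n).map_cfc f (A, B) (by rwa [Prod.spectrum_eq]) hφ hAB
          (hAB.map _)).symm
    _ = fromBlocksStarAlgHom m n (cfc f A, cfc f B) :=
        congrArg _ (cfc_map_prod (S := ℝ) f A B hf hAB hA hB)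
    _ = fromBlocks (cfc f A) 0 0 (cfc f B) := rfl

theorem rpowH_eq_cfc (A : Matrix n n ℂ) (r : ℝ) : A.rpowH r = cfc (fun x : ℝ => x ^ r) A := by
  by_cases hA : A.IsHermitian
  · rw [hA.cfc_eq, rpowH, dif_pos hA]
    rfl
  · rw [rpowH, dif_neg hA]
    exact (cfc_apply_of_not_predicate A hA).symm

theorem isHermitian_rpowH (A : Matrix n n ℂ) (r : ℝ) : (A.rpowH r).IsHermitian := by
  rw [rpowH_eq_cfc]
  exact cfc_predicate _ A

theorem rpowH_eq_rpow {A : Matrix n n ℂ} (hA : A.PosSemidef) (r : ℝ) : A.rpowH r = A ^ r := by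
  rw [rpowH_eq_cfc, CFC.rpow_eq_cfc_real hA.nonneg]

theorem posSemidef_rpowH {A : Matrix n n ℂ} (hA : A.PosSemidef) (r : ℝ) :
    (A.rpowH r).PosSemidef := by
  rw [rpowH_eq_rpow hA]
  exact CFC.rpow_nonneg.posSemidef

theorem rpowH_one {A : Matrix n n ℂ} (hA : A.IsHermitian) : A.rpowH 1 = A := by
  simp only [rpowH_eq_cfc, Real.rpow_one]
  exact cfc_id' ℝ A hA

theorem rpowH_rpowH {A : Matrix n n ℂ} (hA : A.PosSemidef) (r s : ℝ) :
    (A.rpowH r).rpowH s = A.rpowH (r * s) := by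
  have hfin := A.finite_real_spectrum
  simp only [rpowH_eq_cfc]
  calc cfc (fun x : ℝ => x ^ s) (cfc (fun x : ℝ => x ^ r) A)
      = cfc (fun x : ℝ => (x ^ r) ^ s) A :=
        (cfc_comp' (· ^ s) (· ^ r) A ((hfin.image _).continuousOn _) (hfin.continuousOn _)
          hA.1).symm
    _ = cfc (fun x : ℝ => x ^ (r * s)) A := cfc_congr fun x hx =>
        (Real.rpow_mul (spectrum_nonneg_of_nonneg hA.nonneg hx) r s).symm

theorem rpowH_neg_mul_rpowH {S : Matrix n n ℂ} (hS : S.PosDef) (r : ℝ) :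
    S.rpowH (-r) * S.rpowH r = 1 := by
  simpa only [rpowH_eq_rpow hS.posSemidef] using CFC.rpow_neg_mul_rpow r hS.isStrictlyPositive

theorem rpowH_mul_rpowH_neg {S : Matrix n n ℂ} (hS : S.PosDef) (r : ℝ) :
    S.rpowH r * S.rpowH (-r) = 1 := by
  simpa only [neg_neg] using rpowH_neg_mul_rpowH hS (-r)

theorem rpowH_fromBlocks_zero {A : Matrix m m ℂ} {B : Matrix n n ℂ} (hA : A.IsHermitian)
    (hB : B.IsHermitian) (r : ℝ) :
    (fromBlocks A 0 0 B).rpowH r = fromBlocks (A.rpowH r) 0 0 (B.rpowH r) := by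
  simp only [rpowH_eq_cfc, cfc_fromBlocks_zero _ hA hB]

theorem rpowH_conjStarAlgAut {A : Matrix n n ℂ} (hA : A.IsHermitian)
    (U : unitary (Matrix n n ℂ)) (r : ℝ) :
    (Unitary.conjStarAlgAut ℝ _ U A).rpowH r = Unitary.conjStarAlgAut ℝ _ U (A.rpowH r) := by
  have hU : Continuous (Unitary.conjStarAlgAut ℝ _ U) := by
    change Continuous fun B : Matrix n n ℂ => (U : Matrix n n ℂ) * B * star (U : Matrix n n ℂ)
    fun_prop
  simp only [rpowH_eq_cfc]
  exact (StarAlgHomClass.map_cfc (S := ℝ) (Unitary.conjStarAlgAut ℝ _ U) _ A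
    (A.finite_real_spectrum.continuousOn _) hU hA (hA.isSelfAdjoint.map _)).symm

/-- The self-adjoint unitary `1 ⊕ (-1)`; averaging over conjugation by it yields the pinching. -/
def blockReflection (m n : Type*) [Fintype m] [DecidableEq m] [Fintype n] [DecidableEq n] :
    unitary (Matrix (m ⊕ n) (m ⊕ n) ℂ) :=
  ⟨fromBlocks 1 0 0 (-1), by
    simp [Unitary.mem_iff, star_eq_conjTranspose, fromBlocks_conjTranspose, fromBlocks_multiply]⟩

theorem pinching_eq_average (A : Matrix (m ⊕ n) (m ⊕ n) ℂ) :
    pinching A = (1 / 2 : ℝ) • A +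
      (1 / 2 : ℝ) • Unitary.conjStarAlgAut ℝ _ (blockReflection m n) A := by
  rw [← fromBlocks_toBlocks A, pinching_fromBlocks]
  simp [blockReflection, star_eq_conjTranspose, fromBlocks_conjTranspose, fromBlocks_multiply,
    fromBlocks_smul, fromBlocks_add, ← two_smul ℝ, smul_smul]

theorem pinching_rpowH_le {A : Matrix (m ⊕ n) (m ⊕ n) ℂ} (hA : A.PosSemidef) {r : ℝ}
    (hr : r ∈ Set.Icc (0 : ℝ) 1) : pinching (A.rpowH r) ≤ (pinching A).rpowH r := by
  set φ := Unitary.conjStarAlgAut ℝ _ (blockReflection m n)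
  have hφA : (φ A).PosSemidef := hA.mul_mul_conjTranspose_same _
  calc pinching (A.rpowH r)
      = (1 / 2 : ℝ) • A ^ r + (1 / 2 : ℝ) • (φ A) ^ r := by
        rw [pinching_eq_average, ← rpowH_conjStarAlgAut hA.1, rpowH_eq_rpow hA, rpowH_eq_rpow hφA]
    _ ≤ ((1 / 2 : ℝ) • A + (1 / 2 : ℝ) • φ A) ^ r :=
        (CFC.concaveOn_rpow hr).2 hA.nonneg hφA.nonneg (by norm_num) (by norm_num) (by norm_num)
    _ = (pinching A).rpowH r := by
        rw [← pinching_eq_average, rpowH_eq_rpow (posSemidef_pinching hA)]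

end FunctionalCalculus

section GeometricMean

open scoped MatrixOrder

variable {m n : Type*} [Fintype m] [DecidableEq m] [Fintype n] [DecidableEq n]

theorem isHermitian_rpowH_mul_mul_rpowH (S : Matrix n n ℂ) {A : Matrix n n ℂ}
    (hA : A.IsHermitian) (r : ℝ) : (S.rpowH r * A * S.rpowH r).IsHermitian :=
  hA.isSelfAdjoint.conjugate_self (isHermitian_rpowH S r)

theorem posSemidef_rpowH_mul_mul_rpowH (S : Matrix n n ℂ) {A : Matrix n n ℂ}
    (hA : A.PosSemidef) (r : ℝ) : (S.rpowH r * A * S.rpowH r).PosSemidef :=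
  ((isHermitian_rpowH S r).isSelfAdjoint.conjugate_nonneg hA.nonneg).posSemidef

theorem posSemidef_gmean (β : ℝ) (S : Matrix n n ℂ) {A : Matrix n n ℂ} (hA : A.PosSemidef) :
    (gmean β S A).PosSemidef :=
  posSemidef_rpowH_mul_mul_rpowH _ (posSemidef_rpowH (posSemidef_rpowH_mul_mul_rpowH _ hA _) _) _

theorem rpowH_neg_mul_mul_cancel {S : Matrix n n ℂ} (hS : S.PosDef) (r : ℝ) (A : Matrix n n ℂ) :
    S.rpowH (-r) * (S.rpowH r * A * S.rpowH r) * S.rpowH (-r) = A := by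
  calc S.rpowH (-r) * (S.rpowH r * A * S.rpowH r) * S.rpowH (-r)
      = S.rpowH (-r) * S.rpowH r * A * (S.rpowH r * S.rpowH (-r)) := by simp only [mul_assoc]
    _ = A := by rw [rpowH_neg_mul_rpowH hS, rpowH_mul_rpowH_neg hS, one_mul, mul_one]

theorem gmean_one {S A : Matrix n n ℂ} (hS : S.PosDef) (hA : A.IsHermitian) :
    gmean 1 S A = A := by
  rw [gmean, rpowH_one (isHermitian_rpowH_mul_mul_rpowH S hA _)]
  simpa only [neg_neg] using rpowH_neg_mul_mul_cancel hS (-(1 / 2)) A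

theorem gmean_gmean {S A : Matrix n n ℂ} (hS : S.PosDef) (hA : A.PosSemidef) (β γ : ℝ) :
    gmean β S (gmean γ S A) = gmean (γ * β) S A := by
  simp only [gmean, rpowH_neg_mul_mul_cancel hS,
    rpowH_rpowH (posSemidef_rpowH_mul_mul_rpowH S hA _)]

theorem gmean_fromBlocks_zero (β : ℝ) {S A : Matrix m m ℂ} {T B : Matrix n n ℂ}
    (hS : S.IsHermitian) (hT : T.IsHermitian) (hA : A.IsHermitian) (hB : B.IsHermitian) :
    gmean β (fromBlocks S 0 0 T) (fromBlocks A 0 0 B) =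
      fromBlocks (gmean β S A) 0 0 (gmean β T B) := by
  have hA' := isHermitian_rpowH_mul_mul_rpowH S hA (-(1 / 2))
  have hB' := isHermitian_rpowH_mul_mul_rpowH T hB (-(1 / 2))
  simp only [gmean, rpowH_fromBlocks_zero hS hT, fromBlocks_multiply, Matrix.mul_zero,
    Matrix.zero_mul, add_zero, zero_add, rpowH_fromBlocks_zero hA' hB']

theorem pinching_gmean_le {β : ℝ} (hβ : β ∈ Set.Icc (0 : ℝ) 1) {S : Matrix m m ℂ}
    {T : Matrix n n ℂ} (hS : S.IsHermitian) (hT : T.IsHermitian)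
    {A : Matrix (m ⊕ n) (m ⊕ n) ℂ} (hA : A.PosSemidef) :
    pinching (gmean β (fromBlocks S 0 0 T) A) ≤ gmean β (fromBlocks S 0 0 T) (pinching A) := by
  have hD (r : ℝ) (B : Matrix (m ⊕ n) (m ⊕ n) ℂ) :
      pinching ((fromBlocks S 0 0 T).rpowH r * B * (fromBlocks S 0 0 T).rpowH r) =
        (fromBlocks S 0 0 T).rpowH r * pinching B * (fromBlocks S 0 0 T).rpowH r := by
    rw [rpowH_fromBlocks_zero hS hT, pinching_mul_mul_fromBlocks]
  generalize fromBlocks S 0 0 T = D at hD ⊢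
  have h : pinching ((D.rpowH (-(1 / 2)) * A * D.rpowH (-(1 / 2))).rpowH β) ≤
      (D.rpowH (-(1 / 2)) * pinching A * D.rpowH (-(1 / 2))).rpowH β := by
    rw [← hD]
    exact pinching_rpowH_le (posSemidef_rpowH_mul_mul_rpowH D hA _) hβ
  rw [gmean, hD]
  exact (isHermitian_rpowH D _).isSelfAdjoint.conjugate_le_conjugate h

end GeometricMean

section Feasibility

open scoped MatrixOrder

variable {m n : Type*} [Fintype m] [DecidableEq m] [Fintype n] [DecidableEq n] {α : ℝ}

/-- `A` is feasible for the optimization problem `inf {tr A | A ≥ 0, ρ ≤ σ #_{1/α} A}` that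
defines `QSharp α ρ σ`. -/
def IsFeasible (α : ℝ) (ρ σ A : Matrix n n ℂ) : Prop :=
  A.PosSemidef ∧ ρ ≤ gmean (1 / α) σ A

theorem QSharp_le_trace {ρ σ A : Matrix n n ℂ} (hA : IsFeasible α ρ σ A) :
    QSharp α ρ σ ≤ A.trace.re := by
  refine csInf_le ⟨0, ?_⟩ ⟨A, hA.1, hA.2, rfl⟩
  rintro _ ⟨B, hB, -, rfl⟩
  exact (Complex.le_def.1 hB.trace_nonneg).1

theorem exists_isFeasible (hα : α ≠ 0) {ρ σ : Matrix n n ℂ} (hρ : ρ.IsHermitian)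
    (hσ : σ.PosDef) : ∃ A, IsFeasible α ρ σ A := by
  have hρ' : (ρ⁺).PosSemidef := (CFC.posPart_nonneg ρ).posSemidef
  refine ⟨gmean α σ ρ⁺, posSemidef_gmean α σ hρ', ?_⟩
  calc ρ ≤ ρ⁺ := CFC.le_posPart hρ
    _ = gmean (1 / α) σ (gmean α σ ρ⁺) := by
      rw [gmean_gmean hσ hρ', mul_one_div_cancel hα, gmean_one hσ hρ'.1]

theorem le_QSharp (hα : α ≠ 0) {ρ σ : Matrix n n ℂ} (hρ : ρ.IsHermitian) (hσ : σ.PosDef) {c : ℝ}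
    (hc : ∀ A, IsFeasible α ρ σ A → c ≤ A.trace.re) : c ≤ QSharp α ρ σ := by
  obtain ⟨A, hA⟩ := exists_isFeasible hα hρ hσ
  refine le_csInf ⟨_, A, hA.1, hA.2, rfl⟩ ?_
  rintro _ ⟨B, hB, hρB, rfl⟩
  exact hc B ⟨hB, hρB⟩

theorem isFeasible_fromBlocks_zero_iff {ρ₁ σ₁ A : Matrix m m ℂ} {ρ₂ σ₂ B : Matrix n n ℂ}
    (hσ₁ : σ₁.IsHermitian) (hσ₂ : σ₂.IsHermitian) :
    IsFeasible α (fromBlocks ρ₁ 0 0 ρ₂) (fromBlocks σ₁ 0 0 σ₂) (fromBlocks A 0 0 B) ↔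
      IsFeasible α ρ₁ σ₁ A ∧ IsFeasible α ρ₂ σ₂ B := by
  rw [IsFeasible, IsFeasible, IsFeasible, posSemidef_fromBlocks_zero_iff, and_and_and_comm]
  refine and_congr_right fun ⟨hA, hB⟩ => ?_
  rw [gmean_fromBlocks_zero _ hσ₁ hσ₂ hA.1 hB.1, fromBlocks_zero_le_fromBlocks_zero_iff]

protected theorem IsFeasible.pinching (hα : 1 ≤ α) {ρ₁ σ₁ : Matrix m m ℂ} {ρ₂ σ₂ : Matrix n n ℂ}
    (hσ₁ : σ₁.IsHermitian) (hσ₂ : σ₂.IsHermitian) {A : Matrix (m ⊕ n) (m ⊕ n) ℂ}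
    (hA : IsFeasible α (fromBlocks ρ₁ 0 0 ρ₂) (fromBlocks σ₁ 0 0 σ₂) A) :
    IsFeasible α (fromBlocks ρ₁ 0 0 ρ₂) (fromBlocks σ₁ 0 0 σ₂) (pinching A) := by
  refine ⟨posSemidef_pinching hA.1, ?_⟩
  have hβ : 1 / α ∈ Set.Icc (0 : ℝ) 1 := ⟨by positivity, div_le_one_of_le₀ hα (by positivity)⟩
  calc fromBlocks ρ₁ 0 0 ρ₂ = pinching (fromBlocks ρ₁ 0 0 ρ₂) :=
        (pinching_fromBlocks ρ₁ 0 0 ρ₂).symm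
    _ ≤ pinching (gmean (1 / α) (fromBlocks σ₁ 0 0 σ₂) A) := pinching_mono hA.2
    _ ≤ gmean (1 / α) (fromBlocks σ₁ 0 0 σ₂) (pinching A) :=
        pinching_gmean_le hβ hσ₁ hσ₂ hA.1

theorem QSharp_fromBlocks_zero_le_add (hα : α ≠ 0) {ρ₁ σ₁ : Matrix m m ℂ} {ρ₂ σ₂ : Matrix n n ℂ}
    (hρ₁ : ρ₁.IsHermitian) (hρ₂ : ρ₂.IsHermitian) (hσ₁ : σ₁.PosDef) (hσ₂ : σ₂.PosDef) :
    QSharp α (fromBlocks ρ₁ 0 0 ρ₂) (fromBlocks σ₁ 0 0 σ₂) ≤ QSharp α ρ₁ σ₁ + QSharp α ρ₂ σ₂ := by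
  have h : ∀ A B, IsFeasible α ρ₁ σ₁ A → IsFeasible α ρ₂ σ₂ B →
      QSharp α (fromBlocks ρ₁ 0 0 ρ₂) (fromBlocks σ₁ 0 0 σ₂) ≤ A.trace.re + B.trace.re := by
    intro A B hA hB
    rw [← Complex.add_re, ← trace_fromBlocks A 0 0 B]
    exact QSharp_le_trace ((isFeasible_fromBlocks_zero_iff hσ₁.1 hσ₂.1).2 ⟨hA, hB⟩)
  rw [← sub_le_iff_le_add]
  refine le_QSharp hα hρ₁ hσ₁ fun A hA => ?_
  rw [sub_le_comm]
  exact le_QSharp hα hρ₂ hσ₂ fun B hB => sub_le_iff_le_add'.2 (h A B hA hB)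

theorem add_le_QSharp_fromBlocks_zero (hα : 1 ≤ α) {ρ₁ σ₁ : Matrix m m ℂ} {ρ₂ σ₂ : Matrix n n ℂ}
    (hρ₁ : ρ₁.IsHermitian) (hρ₂ : ρ₂.IsHermitian) (hσ₁ : σ₁.PosDef) (hσ₂ : σ₂.PosDef) :
    QSharp α ρ₁ σ₁ + QSharp α ρ₂ σ₂ ≤ QSharp α (fromBlocks ρ₁ 0 0 ρ₂) (fromBlocks σ₁ 0 0 σ₂) := by
  refine le_QSharp (zero_lt_one.trans_le hα).ne' (hρ₁.fromBlocks conjTranspose_zero hρ₂)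
    (posDef_fromBlocks_zero hσ₁ hσ₂) fun A hA => ?_
  obtain ⟨h₁, h₂⟩ := (isFeasible_fromBlocks_zero_iff hσ₁.1 hσ₂.1).1 (hA.pinching hα hσ₁.1 hσ₂.1)
  calc QSharp α ρ₁ σ₁ + QSharp α ρ₂ σ₂
      ≤ A.toBlocks₁₁.trace.re + A.toBlocks₂₂.trace.re :=
        add_le_add (QSharp_le_trace h₁) (QSharp_le_trace h₂)
    _ = (pinching A).trace.re := by rw [pinching, trace_fromBlocks, Complex.add_re]
    _ = A.trace.re := by rw [trace_pinching]

end Feasibility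

theorem QSharp_blockDiagonal_additive_general
    {n₁ n₂ : Type*} [Fintype n₁] [DecidableEq n₁] [Fintype n₂] [DecidableEq n₂]
    {α : ℝ} (hα : 1 ≤ α) {ρ₁ σ₁ : Matrix n₁ n₁ ℂ} {ρ₂ σ₂ : Matrix n₂ n₂ ℂ}
    (hρ₁ : ρ₁.IsHermitian) (hρ₂ : ρ₂.IsHermitian) (hσ₁ : σ₁.PosDef) (hσ₂ : σ₂.PosDef) :
    QSharp α (fromBlocks ρ₁ 0 0 ρ₂) (fromBlocks σ₁ 0 0 σ₂) =
      QSharp α ρ₁ σ₁ + QSharp α ρ₂ σ₂ :=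
  le_antisymm
    (QSharp_fromBlocks_zero_le_add (zero_lt_one.trans_le hα).ne' hρ₁ hρ₂ hσ₁ hσ₂)
    (add_le_QSharp_fromBlocks_zero hα hρ₁ hρ₂ hσ₁ hσ₂)

/-- block additivity of Q^#_α under direct sums. -/
theorem QSharp_blockDiagonal_additive
    {n₁ n₂ : Type*} [Fintype n₁] [DecidableEq n₁] [Fintype n₂] [DecidableEq n₂]
    (α : ℝ) (hα : 1 < α)
    (ρ₁ : Matrix n₁ n₁ ℂ) (ρ₂ : Matrix n₂ n₂ ℂ)
    (σ₁ : Matrix n₁ n₁ ℂ) (σ₂ : Matrix n₂ n₂ ℂ)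
    (hρ₁ : ρ₁.PosSemidef) (hρ₂ : ρ₂.PosSemidef)
    (hσ₁ : σ₁.PosDef) (hσ₂ : σ₂.PosDef) :
    QSharp α (Matrix.fromBlocks ρ₁ 0 0 ρ₂) (Matrix.fromBlocks σ₁ 0 0 σ₂)
      = QSharp α ρ₁ σ₁ + QSharp α ρ₂ σ₂ :=
  QSharp_blockDiagonal_additive_general hα.le hρ₁.1 hρ₂.1 hσ₁ hσ₂
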